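/- Reduction to finite configurations: let 1 ≤ k < l and let Φ be an algorithm built only from the moves φ_k and φ_l such that for any two l-configurations U, V one has π_k(Φ(U)) = π_k(Φ(V)). Then Φ couples the first k balls when applied to infinite configurations, i.e. π_k(Φ(X)) = π_k(Φ(Y)) for all infinite configurations X, Y. -/

import Mathlib

/-!
The truncation `π_l` intertwines the two kinds of moves: `π_l (φ_j X) = φ_j (π_l X)` for every
infinite configuration `X` and `1 ≤ j ≤ l`.  This is split into two facts.  Before a ball is
deleted, the move on `π_l X` yields exactly the `l + 1` rightmost balls of `φ_j X`
(`move_proj`), since the new ball is put to the right of the `j`-th ball and `j ≤ l`.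
Deleting the leftmost ball of `π_{l+1} Z` yields `π_l Z` (`removeLeft_proj`).

By induction `π_l (Φ X) = Φ (π_l X)` for every algorithm `Φ` made of such moves
(`proj_applyAlg`).  As `π_l X` is an `l`-configuration and `π_k = π_k ∘ π_l` for `k ≤ l`, the
coupling of `l`-configurations carries over to infinite configurations.
-/

open Finset

/-! Bins are indexed by `t : ℕ`, where index `t` stands for the bin labeled `-t`
in the paper (so `t = 0` is the rightmost bin).  A configuration is a function
`X : ℕ → ℕ`, `X t` being the number of balls in bin `t`. -/

/-- `binSum X t` is the number of balls in bins `0, …, t-1`, i.e. strictly to the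
right of bin `t`.  In the paper's notation this is `Σ_{j = -t+1}^{0} X(j)`. -/
def binSum (X : ℕ → ℕ) (t : ℕ) : ℕ := ∑ m ∈ Finset.range t, X m

/-- An infinite configuration: every bin contains a positive number of balls. -/
def IsInfConf (X : ℕ → ℕ) : Prop := ∀ t, 0 < X t

/-- An `n`-configuration: for some `p ≥ 1`, bins `0, …, p-1` are nonempty, all the
other bins are empty, and the total number of balls is `n`. -/
def IsNConf (n : ℕ) (X : ℕ → ℕ) : Prop :=
  ∃ p : ℕ, 1 ≤ p ∧ (∀ t, t < p → 0 < X t) ∧ (∀ t, p ≤ t → X t = 0) ∧ binSum X p = n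

/-- The `n`-ball projection `π_n`: keep the `n` rightmost balls, erase the others.
(Truncated subtraction makes the value `0` as soon as `binSum X t ≥ n`.) -/
def proj (n : ℕ) (X : ℕ → ℕ) : ℕ → ℕ := fun t => min (X t) (n - binSum X t)

/-- The move `φ_k` on infinite configurations: if the rightmost bin contains at
least `k` balls, create a new rightmost bin containing one ball (shifting
everything); otherwise add one ball to the bin immediately to the right of the
bin containing the `k`-th ball counted from the right. -/
noncomputable def move (k : ℕ) (X : ℕ → ℕ) : ℕ → ℕ :=
  if k ≤ X 0 then fun t => if t = 0 then 1 else X (t - 1)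
  else fun t => if t = sInf {b : ℕ | k ≤ binSum X (b + 1)} - 1 then X t + 1 else X t

/-- Delete one ball from the leftmost nonempty bin. -/
noncomputable def removeLeft (X : ℕ → ℕ) : ℕ → ℕ :=
  fun t => if t = sSup {b : ℕ | 0 < X b} then X t - 1 else X t

/-- The move `φ_k` on `n`-configurations: add a ball to the bin immediately to the
right of the bin containing the `k`-th ball from the right (creating a new
rightmost bin if needed), then delete one ball from the leftmost nonempty bin. -/
noncomputable def moveFin (k : ℕ) (X : ℕ → ℕ) : ℕ → ℕ := removeLeft (move k X)

/-- Apply an algorithm, i.e. a finite composition of moves, to an infinite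
configuration.  `applyAlg [k₁, …, kₘ] X = φ_{k₁}(φ_{k₂}(⋯ φ_{kₘ}(X)))`. -/
noncomputable def applyAlg (w : List ℕ) (X : ℕ → ℕ) : ℕ → ℕ := w.foldr move X

/-- Apply an algorithm to a finite configuration. -/
noncomputable def applyAlgFin (w : List ℕ) (X : ℕ → ℕ) : ℕ → ℕ := w.foldr moveFin X

/-- The configuration denoted `[a₁, …, a_p]` in the paper: the list is read from
the leftmost nonempty bin to the rightmost bin. -/
def ofList (L : List ℕ) : ℕ → ℕ := fun t => L.reverse.getD t 0

/-- The distinguished `l`-configurations `X_i` (for `l = k*d + r`, `1 ≤ r ≤ k`):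
`X_0 = [k, …, k, r]` (`d` bins of `k` balls), `X_i = [i, k, …, k, r-i]` (`d` bins
of `k` balls) for `1 ≤ i ≤ r-1`, and `X_i = [i, k, …, k, k+r-i]` (`d-1` bins of
`k` balls) for `r ≤ i ≤ k-1`. -/
def distConf (k d r i : ℕ) : ℕ → ℕ :=
  if i = 0 then ofList (List.replicate d k ++ [r])
  else if i < r then ofList (i :: (List.replicate d k ++ [r - i]))
  else ofList (i :: (List.replicate (d - 1) k ++ [k + r - i]))

/-- The `l`-configurations `Y_j`: `Y_0 = [l]` and `Y_j = [j, l-j]` for `1 ≤ j ≤ l-1`. -/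
def yConf (l j : ℕ) : ℕ → ℕ := if j = 0 then ofList [l] else ofList [j, l - j]

/-- The map `f` from the paper: `f(i) = (k - l + d·i)₊` for `0 ≤ i ≤ k-r-1` and
`f(i) = (k - (d+1)(k-i))₊` for `k-r ≤ i ≤ k-1` (truncated ℕ-subtraction realizes
the positive part). -/
def fMap (k l d r : ℕ) (i : ℕ) : ℕ :=
  if i < k - r then k + d * i - l else k - (d + 1) * (k - i)

/-- The algorithm `Ψ = φ_k^{l-k} ∘ φ_l^{dr + k·d(d-1)/2} ∘ φ_k^{k-r}` acting on
`l`-configurations. -/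
noncomputable def Psi (k l d r : ℕ) (X : ℕ → ℕ) : ℕ → ℕ :=
  (moveFin k)^[l - k] ((moveFin l)^[d * r + k * (d * (d - 1)) / 2] ((moveFin k)^[k - r] X))

lemma binSum_zero (X : ℕ → ℕ) : binSum X 0 = 0 := by simp [binSum]

lemma binSum_succ (X : ℕ → ℕ) (t : ℕ) : binSum X (t + 1) = binSum X t + X t := by
  simp [binSum, Finset.sum_range_succ]

lemma binSum_mono (X : ℕ → ℕ) : Monotone (binSum X) :=
  monotone_nat_of_le_succ fun t => by rw [binSum_succ]; omega

lemma le_binSum {X : ℕ → ℕ} (hX : IsInfConf X) (t : ℕ) : t ≤ binSum X t := by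
  induction t with
  | zero => exact Nat.zero_le _
  | succ t ih => have := hX t; rw [binSum_succ]; omega

lemma binSum_proj (n : ℕ) (X : ℕ → ℕ) (t : ℕ) :
    binSum (proj n X) t = min n (binSum X t) := by
  induction t with
  | zero => simp [binSum_zero]
  | succ t ih => rw [binSum_succ, binSum_succ, ih]; simp only [proj]; omega

lemma proj_proj {k l : ℕ} (hkl : k ≤ l) (X : ℕ → ℕ) : proj k (proj l X) = proj k X := by
  funext t
  have h : proj k (proj l X) t = min (proj l X t) (k - binSum (proj l X) t) := rfl
  rw [h, binSum_proj]
  simp only [proj]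
  omega

/-- The bin `q` that contains the `n`-th ball counted from the right. -/
lemma exists_bin {X : ℕ → ℕ} (hX : IsInfConf X) {n : ℕ} (hn : 1 ≤ n) :
    ∃ q, binSum X q < n ∧ n ≤ binSum X (q + 1) := by
  have hex : ∃ b, n ≤ binSum X (b + 1) := ⟨n, (Nat.le_succ n).trans (le_binSum hX _)⟩
  classical
  refine ⟨Nat.find hex, ?_, Nat.find_spec hex⟩
  rcases hq : Nat.find hex with _ | m
  · rw [binSum_zero]; omega
  · have := Nat.find_min hex (m := m) (by omega)
    omega

lemma isNConf_proj {X : ℕ → ℕ} (hX : IsInfConf X) {l : ℕ} (hl : 1 ≤ l) :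
    IsNConf l (proj l X) := by
  obtain ⟨q, h1, h2⟩ := exists_bin hX hl
  refine ⟨q + 1, by omega, fun t ht => ?_, fun t ht => ?_, ?_⟩
  · have := hX t
    have := binSum_mono X (show t ≤ q by omega)
    simp only [proj]; omega
  · have := binSum_mono X ht
    simp only [proj]; omega
  · rw [binSum_proj]; omega

lemma removeLeft_proj {Z : ℕ → ℕ} (hZ : IsInfConf Z) (l : ℕ) :
    removeLeft (proj (l + 1) Z) = proj l Z := by
  obtain ⟨q, h1, h2⟩ := exists_bin hZ (n := l + 1) (by omega)
  have hset : {b : ℕ | 0 < proj (l + 1) Z b} = Set.Iic q := by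
    ext b
    have := hZ b
    simp only [Set.mem_ofPred_eq, Set.mem_Iic, proj]
    constructor
    · intro h
      by_contra hb
      have := binSum_mono Z (show q + 1 ≤ b by omega)
      omega
    · intro h
      have := binSum_mono Z h
      omega
  funext t
  simp only [removeLeft, hset, csSup_Iic]
  have hs := binSum_succ Z t
  rcases lt_trichotomy t q with h | h | h
  · have := binSum_mono Z (show t + 1 ≤ q by omega)
    rw [if_neg (by omega)]
    simp only [proj]; omega
  · subst h
    simp only [proj, if_true]; omega
  · have := binSum_mono Z (show q + 1 ≤ t by omega)
    rw [if_neg (by omega)]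
    simp only [proj]; omega

lemma isInfConf_move {X : ℕ → ℕ} (hX : IsInfConf X) (j : ℕ) : IsInfConf (move j X) := by
  intro t
  have h1 := hX t
  have h2 := hX (t - 1)
  unfold move
  split_ifs <;> dsimp only <;> split_ifs <;> omega

/-- The partial sums of a configuration in which a new rightmost bin with one ball was created. -/
lemma binSum_shift (X : ℕ → ℕ) (t : ℕ) :
    binSum (fun s => if s = 0 then 1 else X (s - 1)) (t + 1) = binSum X t + 1 := by
  induction t with
  | zero => simp [binSum]
  | succ t ih => rw [binSum_succ, ih, binSum_succ]; simp; omega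

/-- The partial sums of a configuration after adding one ball to bin `c`. -/
lemma binSum_add_ball (X : ℕ → ℕ) (c t : ℕ) :
    binSum (fun s => if s = c then X s + 1 else X s) t
      = binSum X t + if c < t then 1 else 0 := by
  induction t with
  | zero => simp [binSum]
  | succ t ih => rw [binSum_succ, ih, binSum_succ]; split_ifs <;> omega

lemma move_proj {X : ℕ → ℕ} (hX : IsInfConf X) {j l : ℕ} (hj : 1 ≤ j) (hjl : j ≤ l) :
    move j (proj l X) = proj (l + 1) (move j X) := by
  have h0 : j ≤ proj l X 0 ↔ j ≤ X 0 := by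
    simp only [proj, binSum_zero]; omega
  -- the `j`-th ball lies in the same bin of `X` and of its truncation
  have hset : {b : ℕ | j ≤ binSum (proj l X) (b + 1)} = {b : ℕ | j ≤ binSum X (b + 1)} := by
    ext b
    simp only [Set.mem_ofPred_eq, binSum_proj]; omega
  by_cases hc : j ≤ X 0
  · unfold move
    rw [if_pos hc, if_pos (h0.2 hc)]
    funext t
    rcases t with _ | t
    · simp [proj, binSum_zero]
    · simp only [proj, binSum_shift]
      simp
  · unfold move
    rw [if_neg hc, if_neg (mt h0.1 hc), hset]
    obtain ⟨q, hq, hq'⟩ := exists_bin hX hj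
    have hinf : sInf {b : ℕ | j ≤ binSum X (b + 1)} = q := by
      have hmem : q ∈ {b : ℕ | j ≤ binSum X (b + 1)} := hq'
      apply le_antisymm (Nat.sInf_le hmem)
      refine le_csInf ⟨q, hmem⟩ fun b hb => ?_
      by_contra hlt
      have := binSum_mono X (show b + 1 ≤ q by omega)
      simp only [Set.mem_ofPred_eq] at hb
      omega
    rw [hinf]
    have hmono := binSum_mono X (show q - 1 ≤ q by omega)
    funext t
    simp only [proj, binSum_add_ball]
    have hs := binSum_succ X t
    rcases lt_trichotomy t (q - 1) with h | h | h
    · have := binSum_mono X (show t + 1 ≤ q by omega)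
      rw [if_neg (by omega), if_neg (by omega), if_neg (by omega)]
      omega
    · subst h
      simp only [if_true, lt_irrefl, if_false]
      omega
    · rw [if_neg (by omega), if_neg (by omega), if_pos h]
      omega

lemma proj_applyAlg {l : ℕ} (w : List ℕ) (hw : ∀ j ∈ w, 1 ≤ j ∧ j ≤ l)
    {X : ℕ → ℕ} (hX : IsInfConf X) :
    IsInfConf (applyAlg w X) ∧ proj l (applyAlg w X) = applyAlgFin w (proj l X) := by
  induction w with
  | nil => exact ⟨hX, rfl⟩
  | cons j w ih =>
    obtain ⟨h1, h2⟩ := ih fun i hi => hw i (List.mem_cons_of_mem _ hi)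
    obtain ⟨hj, hjl⟩ := hw j List.mem_cons_self
    refine ⟨isInfConf_move h1 j, ?_⟩
    change proj l (move j (applyAlg w X)) = removeLeft (move j (applyAlgFin w (proj l X)))
    rw [← h2, move_proj h1 hj hjl, removeLeft_proj (isInfConf_move h1 j)]

/-- Reduction to finite configurations: if an algorithm built
only from `φ_k` and `φ_l` (`1 ≤ k < l`) couples the first `k` balls of any two
`l`-configurations, then it couples the first `k` balls of any two infinite
configurations. -/
theorem coupling_of_finite_coupling (k l : ℕ) (hk : 1 ≤ k) (hkl : k < l)
    (w : List ℕ) (hw : ∀ j ∈ w, j = k ∨ j = l)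
    (hfin : ∀ U V : ℕ → ℕ, IsNConf l U → IsNConf l V →
      proj k (applyAlgFin w U) = proj k (applyAlgFin w V)) :
    ∀ X Y : ℕ → ℕ, IsInfConf X → IsInfConf Y →
      proj k (applyAlg w X) = proj k (applyAlg w Y) := by
  intro X Y hX hY
  have hw' : ∀ j ∈ w, 1 ≤ j ∧ j ≤ l := fun j hj => by
    rcases hw j hj with h | h <;> omega
  rw [← proj_proj hkl.le (applyAlg w X), ← proj_proj hkl.le (applyAlg w Y),
    (proj_applyAlg w hw' hX).2, (proj_applyAlg w hw' hY).2]
  exact hfin _ _ (isNConf_proj hX (by omega)) (isNConf_proj hY (by omega))
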